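/- arXiv:1906.07583 — 2 statements merged into one kernel-verified Lean document; each statement's English description precedes it below -/
import Mathlib

section
/- Let N ≥ 2 be an integer. For every real-valued smooth function φ with compact support contained in the open upper half-space ℝ^N_+, one has ∫_{ℝ^N_+} |∇φ(x)|² dx ≥ (N²/4) ∫_{ℝ^N_+} φ(x)²/|x|² dx. -/
open MeasureTheory Real Set Filter

noncomputable section

/-- The last coordinate `x_N` of a point in `ℝ^N`. -/
def lastCoord {N : ℕ} (x : EuclideanSpace ℝ (Fin N)) : ℝ :=
  if h : 0 < N then x ⟨N - 1, Nat.sub_lt h one_pos⟩ else 0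

/-- The open upper half-space `ℝ^N_+ = {x : x_N > 0}`. -/
def upperHalf (N : ℕ) : Set (EuclideanSpace ℝ (Fin N)) :=
  {x | 0 < lastCoord x}

/-- The Laplacian, as the sum of second directional derivatives along the standard basis. -/
def lap {N : ℕ} (f : EuclideanSpace ℝ (Fin N) → ℝ) (x : EuclideanSpace ℝ (Fin N)) : ℝ :=
  ∑ i : Fin N, iteratedFDeriv ℝ 2 f x ![EuclideanSpace.single i 1, EuclideanSpace.single i 1]

/-
Let `ρ(x) = ⟪e, x⟫ |x| ^ (-n / 2)`, which is positive on the half-space `⟪e, x⟫ > 0`, and let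
`X = ∇ log ρ`. Expanding `|∇φ - φ X|² ≥ 0` gives the pointwise bound
`φ² (-(div X + |X|²)) ≤ |∇φ|² - div (φ² X)`, and the last divergence integrates to zero.
The weight `-(div X + |X|²) = -Δρ / ρ` on the left is equal to `n² / (4 |x|²)`.
-/

section FDeriv

variable {E F : Type*} [NormedAddCommGroup E] [NormedSpace ℝ E] [MeasurableSpace E] [BorelSpace E]
  [NormedAddCommGroup F] [NormedSpace ℝ F] (μ : Measure E)

lemma integrable_fderiv [IsFiniteMeasureOnCompacts μ] {f : E → F} (hf : ContDiff ℝ 1 f)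
    (hcomp : HasCompactSupport f) : Integrable (fderiv ℝ f) μ :=
  (hf.continuous_fderiv one_ne_zero).integrable_of_hasCompactSupport (hcomp.fderiv ℝ)

lemma integral_fderiv_eq_zero [FiniteDimensional ℝ E] [μ.IsAddHaarMeasure] [CompleteSpace F]
    {f : E → F} (hf : ContDiff ℝ 1 f) (hcomp : HasCompactSupport f) : ∫ x, fderiv ℝ f x ∂μ = 0 := by
  have hint := integrable_fderiv μ hf hcomp
  ext v
  have hparts := integral_smul_fderiv_eq_neg_fderiv_smul_of_integrable (μ := μ)
    (f := fun _ ↦ (1 : ℝ)) (g := f) (v := v) (by simp)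
    (by simpa using hint.apply_continuousLinearMap v)
    (by simpa using hf.continuous.integrable_of_hasCompactSupport hcomp) (by fun_prop)
    (fun x _ ↦ hf.differentiable one_ne_zero x)
  simpa [ContinuousLinearMap.integral_apply hint] using hparts

end FDeriv

section Divergence

variable {E : Type*} [NormedAddCommGroup E] [NormedSpace ℝ E] [FiniteDimensional ℝ E]

variable (E) in
/-- The trace of endomorphisms of `E`, as a continuous linear form; continuity is what lets it
commute with integrals. -/
def traceCLM : (E →L[ℝ] E) →L[ℝ] ℝ :=
  (LinearMap.trace ℝ E ∘ₗ ContinuousLinearMap.coeLM ℝ).toContinuousLinearMap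

lemma traceCLM_apply (A : E →L[ℝ] E) : traceCLM E A = LinearMap.trace ℝ E A := rfl

/-- The divergence of a vector field `X`, encoded without coordinates as the trace of its
derivative, hence `0` where `X` is not differentiable. -/
def divergence (X : E → E) (x : E) : ℝ :=
  traceCLM E (fderiv ℝ X x)

lemma divergence_const (v x : E) : divergence (fun _ ↦ v) x = 0 := by
  simp [divergence]

lemma divergence_id (x : E) : divergence (fun y ↦ y) x = Module.finrank ℝ E := by
  simp [divergence, traceCLM_apply]

lemma divergence_const_smul {X : E → E} {x : E} (hX : DifferentiableAt ℝ X x) (c : ℝ) :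
    divergence (fun y ↦ c • X y) x = c * divergence X x := by
  simp [divergence, fderiv_fun_const_smul hX]

lemma divergence_sub {X Y : E → E} {x : E} (hX : DifferentiableAt ℝ X x)
    (hY : DifferentiableAt ℝ Y x) :
    divergence (fun y ↦ X y - Y y) x = divergence X x - divergence Y x := by
  simp [divergence, fderiv_fun_sub hX hY]

lemma divergence_smul {f : E → ℝ} {X : E → E} {x : E} (hf : DifferentiableAt ℝ f x)
    (hX : DifferentiableAt ℝ X x) :
    divergence (fun y ↦ f y • X y) x = f x * divergence X x + fderiv ℝ f x (X x) := by
  simp [divergence, traceCLM_apply, fderiv_fun_smul hf hX]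

lemma divergence_inv_smul {f : E → ℝ} {X : E → E} {x : E} (hf : DifferentiableAt ℝ f x)
    (hfx : f x ≠ 0) (hX : DifferentiableAt ℝ X x) :
    divergence (fun y ↦ (f y)⁻¹ • X y) x
      = divergence X x / f x - fderiv ℝ f x (X x) / f x ^ 2 := by
  have hinv : HasFDerivAt (fun y ↦ (f y)⁻¹) (-(f x ^ 2)⁻¹ • fderiv ℝ f x) x :=
    (hasDerivAt_inv hfx).comp_hasFDerivAt x hf.hasFDerivAt
  rw [divergence_smul hinv.differentiableAt hX, hinv.fderiv, smul_apply, smul_eq_mul]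
  ring

lemma divergence_of_notMem_tsupport {X : E → E} {x : E} (hx : x ∉ tsupport X) :
    divergence X x = 0 := by
  simp [divergence, fderiv_of_notMem_tsupport ℝ hx]

lemma continuousOn_divergence {X : E → E} {U : Set E} (hU : IsOpen U) (hX : ContDiffOn ℝ 1 X U) :
    ContinuousOn (divergence X) U :=
  (traceCLM E).continuous.comp_continuousOn (hX.continuousOn_fderiv_of_isOpen hU le_rfl)

variable [MeasurableSpace E] [BorelSpace E] (μ : Measure E)

lemma integrable_divergence [IsFiniteMeasureOnCompacts μ] {X : E → E} (hX : ContDiff ℝ 1 X)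
    (hcomp : HasCompactSupport X) : Integrable (divergence X) μ :=
  (traceCLM E).integrable_comp (integrable_fderiv μ hX hcomp)

theorem integral_divergence_eq_zero [μ.IsAddHaarMeasure] {X : E → E} (hX : ContDiff ℝ 1 X)
    (hcomp : HasCompactSupport X) : ∫ x, divergence X x ∂μ = 0 :=
  calc ∫ x, divergence X x ∂μ = traceCLM E (∫ x, fderiv ℝ X x ∂μ) :=
        (traceCLM E).integral_comp_comm (integrable_fderiv μ hX hcomp)
    _ = 0 := by rw [integral_fderiv_eq_zero μ hX hcomp, map_zero]

end Divergence

lemma integrable_mul_of_continuousOn_tsupport {α : Type*} [TopologicalSpace α] [T2Space α]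
    [MeasurableSpace α] [OpensMeasurableSpace α] (μ : Measure α) [IsFiniteMeasureOnCompacts μ]
    {f g : α → ℝ} (hcomp : HasCompactSupport f) (hf : Continuous f)
    (hg : ContinuousOn g (tsupport f)) : Integrable (fun x ↦ f x * g x) μ :=
  (integrableOn_iff_integrable_of_support_subset <|
    (Function.support_mul_subset_left f g).trans (subset_tsupport f)).1 <|
      (hf.continuousOn.mul hg).integrableOn_compact hcomp

lemma contDiff_smul_of_tsupport_subset {E F : Type*} [NormedAddCommGroup E] [NormedSpace ℝ E]
    [NormedAddCommGroup F] [NormedSpace ℝ F] {n : WithTop ℕ∞} {f : E → ℝ} {g : E → F} {U : Set E}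
    (hU : IsOpen U) (hf : ContDiff ℝ n f) (hg : ContDiffOn ℝ n g U) (hfU : tsupport f ⊆ U) :
    ContDiff ℝ n fun x ↦ f x • g x := by
  refine contDiff_iff_contDiffAt.2 fun x ↦ ?_
  by_cases hx : x ∈ tsupport f
  · exact hf.contDiffAt.smul (hg.contDiffAt (hU.mem_nhds (hfU hx)))
  · refine (contDiffAt_const (c := (0 : F))).congr_of_eventuallyEq ?_
    filter_upwards [notMem_tsupport_iff_eventuallyEq.1 hx] with y hy
    simp [hy]

lemma tsupport_sq_smul_subset {α E : Type*} [TopologicalSpace α] [AddCommGroup E] [Module ℝ E]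
    (f : α → ℝ) (g : α → E) : (tsupport fun x ↦ f x ^ 2 • g x) ⊆ tsupport f := by
  simpa only [sq, mul_smul] using tsupport_smul_subset_left f fun x ↦ f x • g x

open scoped Gradient RealInnerProductSpace

section Gradient

variable {E : Type*} [NormedAddCommGroup E] [InnerProductSpace ℝ E] [CompleteSpace E]

lemma continuous_gradient {φ : E → ℝ} (hφ : ContDiff ℝ 1 φ) : Continuous (∇ φ) :=
  (InnerProductSpace.toDual ℝ E).symm.continuous.comp (hφ.continuous_fderiv one_ne_zero)

lemma hasCompactSupport_gradient {φ : E → ℝ} (hcomp : HasCompactSupport φ) :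
    HasCompactSupport (∇ φ) :=
  (hcomp.fderiv ℝ).comp_left (map_zero (InnerProductSpace.toDual ℝ E).symm)

lemma gradient_of_notMem_tsupport {φ : E → ℝ} {x : E} (hx : x ∉ tsupport φ) : ∇ φ x = 0 := by
  simp [gradient, fderiv_of_notMem_tsupport ℝ hx]

end Gradient

section VectorField

variable {E : Type*} [NormedAddCommGroup E] [InnerProductSpace ℝ E] [FiniteDimensional ℝ E]

lemma norm_gradient_sub_smul_sq {φ : E → ℝ} {X : E → E} {x : E} (hφ : DifferentiableAt ℝ φ x)
    (hX : DifferentiableAt ℝ X x) :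
    ‖∇ φ x - φ x • X x‖ ^ 2 = ‖∇ φ x‖ ^ 2 - divergence (fun y ↦ φ y ^ 2 • X y) x
      + φ x ^ 2 * (divergence X x + ‖X x‖ ^ 2) := by
  rw [divergence_smul (hφ.fun_pow 2) hX, norm_sub_sq_real, real_inner_smul_right,
    inner_gradient_left, norm_smul, mul_pow, fderiv_fun_pow 2 hφ]
  simp only [norm_eq_abs, sq_abs, Nat.add_one_sub_one, pow_one, nsmul_eq_mul, Nat.cast_ofNat,
    smul_apply, smul_eq_mul]
  ring

lemma sq_mul_le_norm_gradient_sq_sub_divergence {φ : E → ℝ} {X : E → E} {x : E}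
    (hφ : DifferentiableAt ℝ φ x) (hX : x ∈ tsupport φ → DifferentiableAt ℝ X x) :
    φ x ^ 2 * -(divergence X x + ‖X x‖ ^ 2)
      ≤ ‖∇ φ x‖ ^ 2 - divergence (fun y ↦ φ y ^ 2 • X y) x := by
  by_cases hx : x ∈ tsupport φ
  · linarith [norm_gradient_sub_smul_sq hφ (hX hx), sq_nonneg ‖∇ φ x - φ x • X x‖]
  · have hdiv : divergence (fun y ↦ φ y ^ 2 • X y) x = 0 :=
      divergence_of_notMem_tsupport fun h ↦ hx (tsupport_sq_smul_subset φ X h)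
    simp [image_eq_zero_of_notMem_tsupport hx, hdiv]

variable [MeasurableSpace E] [BorelSpace E] (μ : Measure E)

lemma integrable_norm_gradient_sq [IsFiniteMeasureOnCompacts μ] {φ : E → ℝ}
    (hφ : ContDiff ℝ 1 φ) (hcomp : HasCompactSupport φ) :
    Integrable (fun x ↦ ‖∇ φ x‖ ^ 2) μ := by
  have hcont : Continuous fun x ↦ ‖∇ φ x‖ ^ 2 := (continuous_gradient hφ).norm.pow 2
  refine hcont.integrable_of_hasCompactSupport ?_
  exact (hasCompactSupport_gradient hcomp).comp_left (g := fun v ↦ ‖v‖ ^ 2) (by simp)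

theorem integral_sq_mul_le_integral_norm_gradient_sq [μ.IsAddHaarMeasure] {φ : E → ℝ} {X : E → E}
    {U : Set E} (hU : IsOpen U) (hφ : ContDiff ℝ 1 φ) (hcomp : HasCompactSupport φ)
    (hφU : tsupport φ ⊆ U) (hX : ContDiffOn ℝ 1 X U) :
    ∫ x, φ x ^ 2 * -(divergence X x + ‖X x‖ ^ 2) ∂μ ≤ ∫ x, ‖∇ φ x‖ ^ 2 ∂μ := by
  have hφX : ContDiff ℝ 1 fun x ↦ φ x ^ 2 • X x := by
    simpa only [sq, mul_smul] using
      contDiff_smul_of_tsupport_subset (g := fun x ↦ φ x • X x) hU hφ (hφ.contDiffOn.smul hX) hφU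
  have hφX_comp : HasCompactSupport fun x ↦ φ x ^ 2 • X x :=
    hcomp.of_isClosed_subset (isClosed_tsupport _) (tsupport_sq_smul_subset φ X)
  have hpointwise (x : E) : φ x ^ 2 * -(divergence X x + ‖X x‖ ^ 2)
      ≤ ‖∇ φ x‖ ^ 2 - divergence (fun y ↦ φ y ^ 2 • X y) x :=
    sq_mul_le_norm_gradient_sq_sub_divergence (hφ.differentiable one_ne_zero x) fun hx ↦
      (hX.contDiffAt (hU.mem_nhds (hφU hx))).differentiableAt one_ne_zero
  have hgrad := integrable_norm_gradient_sq μ hφ hcomp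
  have hdiv := integrable_divergence μ hφX hφX_comp
  have hweight : Integrable (fun x ↦ φ x ^ 2 * -(divergence X x + ‖X x‖ ^ 2)) μ := by
    have hcont : ContinuousOn (fun x ↦ -(divergence X x + ‖X x‖ ^ 2)) (tsupport φ) :=
      ((continuousOn_divergence hU hX).add (hX.continuousOn.norm.pow 2)).neg.mono hφU
    simpa only [pow_two (φ _), mul_assoc] using integrable_mul_of_continuousOn_tsupport μ
      (g := fun x ↦ φ x * -(divergence X x + ‖X x‖ ^ 2)) hcomp hφ.continuous
      (hφ.continuous.continuousOn.mul hcont)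
  calc ∫ x, φ x ^ 2 * -(divergence X x + ‖X x‖ ^ 2) ∂μ
      ≤ ∫ x, ‖∇ φ x‖ ^ 2 - divergence (fun y ↦ φ y ^ 2 • X y) x ∂μ :=
        integral_mono hweight (hgrad.sub hdiv) hpointwise
    _ = ∫ x, ‖∇ φ x‖ ^ 2 ∂μ := by
        rw [integral_sub hgrad hdiv, integral_divergence_eq_zero μ hφX hφX_comp, sub_zero]

end VectorField

section HalfSpace

variable {E : Type*} [NormedAddCommGroup E] [InnerProductSpace ℝ E]

/-- The logarithmic gradient of `⟪e, x⟫ |x| ^ (-n / 2)`, where `n` is the dimension: the vector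
field that produces the Hardy weight `n² / (4 |x|²)`. -/
def hardyField (e x : E) : E :=
  ⟪e, x⟫⁻¹ • e - (Module.finrank ℝ E / 2 : ℝ) • (‖x‖ ^ 2)⁻¹ • x

lemma right_ne_zero_of_inner_ne_zero {e x : E} (hx : ⟪e, x⟫ ≠ 0) : x ≠ 0 := by
  rintro rfl
  exact hx (inner_zero_right e)

lemma contDiffAt_inv_inner_smul {n : WithTop ℕ∞} {e x : E} (hx : ⟪e, x⟫ ≠ 0) :
    ContDiffAt ℝ n (fun y ↦ ⟪e, y⟫⁻¹ • e) x :=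
  ((innerSL ℝ e).contDiff.contDiffAt.inv hx).smul contDiffAt_const

lemma contDiffAt_inv_norm_sq_smul {n : WithTop ℕ∞} {x : E} (hx : x ≠ 0) :
    ContDiffAt ℝ n (fun y ↦ (‖y‖ ^ 2)⁻¹ • y) x :=
  ((contDiff_norm_sq ℝ).contDiffAt.inv (pow_ne_zero 2 (norm_ne_zero_iff.2 hx))).smul contDiffAt_id

lemma contDiffAt_hardyField {n : WithTop ℕ∞} {e x : E} (hx : ⟪e, x⟫ ≠ 0) :
    ContDiffAt ℝ n (hardyField e) x :=
  (contDiffAt_inv_inner_smul hx).sub <|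
    (contDiffAt_inv_norm_sq_smul (right_ne_zero_of_inner_ne_zero hx)).const_smul _

lemma norm_hardyField_sq {e x : E} (hx : ⟪e, x⟫ ≠ 0) :
    ‖hardyField e x‖ ^ 2 = ‖e‖ ^ 2 / ⟪e, x⟫ ^ 2
      + (Module.finrank ℝ E ^ 2 / 4 - Module.finrank ℝ E) / ‖x‖ ^ 2 := by
  have hx0 : ‖x‖ ≠ 0 := by simpa using right_ne_zero_of_inner_ne_zero hx
  rw [hardyField, norm_sub_sq_real]
  simp only [norm_smul, real_inner_smul_left, real_inner_smul_right, mul_pow, norm_eq_abs, sq_abs]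
  field_simp
  ring

variable [FiniteDimensional ℝ E]

lemma divergence_inv_inner_smul {e x : E} (hx : ⟪e, x⟫ ≠ 0) :
    divergence (fun y ↦ ⟪e, y⟫⁻¹ • e) x = -(‖e‖ ^ 2 / ⟪e, x⟫ ^ 2) := by
  have hinner : HasFDerivAt (fun y ↦ ⟪e, y⟫) (innerSL ℝ e) x := (innerSL ℝ e).hasFDerivAt
  rw [divergence_inv_smul hinner.differentiableAt hx (differentiableAt_const e), divergence_const,
    hinner.fderiv, innerSL_apply_apply, real_inner_self_eq_norm_sq]
  ring

lemma divergence_inv_norm_sq_smul {x : E} (hx : x ≠ 0) :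
    divergence (fun y ↦ (‖y‖ ^ 2)⁻¹ • y) x = (Module.finrank ℝ E - 2) / ‖x‖ ^ 2 := by
  have hx0 : ‖x‖ ≠ 0 := norm_ne_zero_iff.2 hx
  have hnorm : HasFDerivAt (fun y : E ↦ ‖y‖ ^ 2) (2 • innerSL ℝ x) x :=
    (hasStrictFDerivAt_norm_sq x).hasFDerivAt
  have hfderiv : fderiv ℝ (fun y : E ↦ ‖y‖ ^ 2) x x = 2 * ‖x‖ ^ 2 := by
    simp [hnorm.fderiv]
  rw [divergence_inv_smul hnorm.differentiableAt (pow_ne_zero 2 hx0) differentiableAt_fun_id,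
    divergence_id, hfderiv]
  field_simp

lemma divergence_hardyField {e x : E} (hx : ⟪e, x⟫ ≠ 0) :
    divergence (hardyField e) x = -(‖e‖ ^ 2 / ⟪e, x⟫ ^ 2)
      - (Module.finrank ℝ E ^ 2 / 2 - Module.finrank ℝ E) / ‖x‖ ^ 2 := by
  have hx0 := right_ne_zero_of_inner_ne_zero hx
  have hinner : DifferentiableAt ℝ (fun y ↦ ⟪e, y⟫⁻¹ • e) x :=
    (contDiffAt_inv_inner_smul hx).differentiableAt one_ne_zero
  have hnorm : DifferentiableAt ℝ (fun y : E ↦ (‖y‖ ^ 2)⁻¹ • y) x :=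
    (contDiffAt_inv_norm_sq_smul hx0).differentiableAt one_ne_zero
  unfold hardyField
  rw [divergence_sub hinner (hnorm.fun_const_smul _), divergence_const_smul hnorm,
    divergence_inv_inner_smul hx, divergence_inv_norm_sq_smul hx0]
  ring

lemma divergence_hardyField_add_norm_sq {e x : E} (hx : ⟪e, x⟫ ≠ 0) :
    divergence (hardyField e) x + ‖hardyField e x‖ ^ 2
      = -(Module.finrank ℝ E ^ 2 / 4 / ‖x‖ ^ 2) := by
  rw [divergence_hardyField hx, norm_hardyField_sq hx]
  ring

variable [MeasurableSpace E] [BorelSpace E] (μ : Measure E) [μ.IsAddHaarMeasure]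

theorem stmt0_general (e : E) {φ : E → ℝ} (hφ : ContDiff ℝ 1 φ) (hcomp : HasCompactSupport φ)
    (hsupp : tsupport φ ⊆ {x | 0 < ⟪e, x⟫}) :
    (Module.finrank ℝ E ^ 2 / 4) * ∫ x in {x | 0 < ⟪e, x⟫}, φ x ^ 2 / ‖x‖ ^ 2 ∂μ ≤
      ∫ x in {x | 0 < ⟪e, x⟫}, ‖∇ φ x‖ ^ 2 ∂μ := by
  have hopen : IsOpen {x | 0 < ⟪e, x⟫} := isOpen_lt continuous_const (by fun_prop)
  have hX : ContDiffOn ℝ 1 (hardyField e) {x | 0 < ⟪e, x⟫} := fun x hx ↦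
    (contDiffAt_hardyField (ne_of_gt hx)).contDiffWithinAt
  have hoff {x : E} (hx : x ∉ {x | 0 < ⟪e, x⟫}) : x ∉ tsupport φ := fun h ↦ hx (hsupp h)
  calc (Module.finrank ℝ E ^ 2 / 4) * ∫ x in {x | 0 < ⟪e, x⟫}, φ x ^ 2 / ‖x‖ ^ 2 ∂μ
      = ∫ x in {x | 0 < ⟪e, x⟫},
          φ x ^ 2 * -(divergence (hardyField e) x + ‖hardyField e x‖ ^ 2) ∂μ := by
        rw [← integral_const_mul]
        refine setIntegral_congr_fun hopen.measurableSet fun x hx ↦ ?_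
        simp only [divergence_hardyField_add_norm_sq (ne_of_gt hx)]
        ring
    _ = ∫ x, φ x ^ 2 * -(divergence (hardyField e) x + ‖hardyField e x‖ ^ 2) ∂μ :=
        setIntegral_eq_integral_of_forall_compl_eq_zero fun x hx ↦ by
          simp [image_eq_zero_of_notMem_tsupport (hoff hx)]
    _ ≤ ∫ x, ‖∇ φ x‖ ^ 2 ∂μ :=
        integral_sq_mul_le_integral_norm_gradient_sq μ hopen hφ hcomp hsupp hX
    _ = ∫ x in {x | 0 < ⟪e, x⟫}, ‖∇ φ x‖ ^ 2 ∂μ :=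
        (setIntegral_eq_integral_of_forall_compl_eq_zero fun x hx ↦ by
          simp [gradient_of_notMem_tsupport (hoff hx)]).symm

end HalfSpace

lemma exists_upperHalf_eq_inner_pos (N : ℕ) :
    ∃ e : EuclideanSpace ℝ (Fin N), upperHalf N = {x | 0 < ⟪e, x⟫} := by
  rcases N.eq_zero_or_pos with rfl | hN
  · exact ⟨0, by simp [upperHalf, lastCoord]⟩
  · refine ⟨EuclideanSpace.single ⟨N - 1, Nat.sub_lt hN one_pos⟩ 1, ?_⟩
    simp [upperHalf, lastCoord, hN, EuclideanSpace.inner_single_left]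

/-- Hardy inequality in the half-space: for smooth compactly supported `φ` in `ℝ^N_+`,
`∫ |∇φ|² ≥ (N²/4) ∫ φ²/|x|²`. -/
theorem stmt0 (N : ℕ) (hN : 2 ≤ N) (φ : EuclideanSpace ℝ (Fin N) → ℝ)
    (hφ : ContDiff ℝ (⊤ : ℕ∞) φ) (hcomp : HasCompactSupport φ)
    (hsupp : tsupport φ ⊆ upperHalf N) :
    ((N : ℝ) ^ 2 / 4) * ∫ x in upperHalf N, (φ x) ^ 2 / ‖x‖ ^ 2 ≤
      ∫ x in upperHalf N, ‖gradient φ x‖ ^ 2 := by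
  obtain ⟨e, he⟩ := exists_upperHalf_eq_inner_pos N
  simpa [he] using stmt0_general volume e (hφ.of_le (mod_cast le_top)) hcomp (he ▸ hsupp)
end
end

section
/- Let N ≥ 2 and μ₁ = −N²/4. Then the function u(x) := |x|^{−N/2} x_N ln(1/|x|) is C² on ℝ^N_+ and satisfies −Δu(x) + (μ₁/|x|²) u(x) = 0 for every x ∈ ℝ^N_+. -/
/-!
A function `φ(|x|) h(x)`, with `h` harmonic and satisfying Euler's relation `x · ∇h = d h`, has
Laplacian `(φ'' + (N - 1 + 2d) φ' / |x|) h`. For `φ(r) = r ^ p log (1 / r)` this is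
`r ^ (p - 2) (p (p + m) log (1 / r) - (2p + m)) h` with `m = N - 2 + 2d`. The logarithmic
perturbation disappears exactly at the double root `p = -m / 2` of the indicial equation
`p (p + m) = -m² / 4`; a linear function has `d = 1`, hence `m = N` and `p = -N / 2`.
-/

open MeasureTheory Real Set Filter

noncomputable section

section SecondDerivative

open scoped Topology RealInnerProductSpace

variable {E : Type*} [NormedAddCommGroup E]

theorem iteratedFDeriv_two_mul [NormedSpace ℝ E] {f g : E → ℝ} {x : E} (hf : ContDiffAt ℝ 2 f x)
    (hg : ContDiffAt ℝ 2 g x) (v w : E) :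
    iteratedFDeriv ℝ 2 (fun y => f y * g y) x ![v, w] =
      f x * iteratedFDeriv ℝ 2 g x ![v, w] + fderiv ℝ f x v * fderiv ℝ g x w +
        fderiv ℝ g x v * fderiv ℝ f x w + g x * iteratedFDeriv ℝ 2 f x ![v, w] := by
  have hfderiv : (fderiv ℝ fun y => f y * g y) =ᶠ[𝓝 x]
      fun y => f y • fderiv ℝ g y + g y • fderiv ℝ f y := by
    filter_upwards [hf.eventually (by simp), hg.eventually (by simp)] with y hfy hgy
    exact fderiv_fun_mul (hfy.differentiableAt two_ne_zero) (hgy.differentiableAt two_ne_zero)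
  have hasFDerivAt_fderiv {k : E → ℝ} (hk : ContDiffAt ℝ 2 k x) :
      HasFDerivAt (fderiv ℝ k) (fderiv ℝ (fderiv ℝ k) x) x :=
    ((hk.fderiv_right (m := 1) (by norm_num)).differentiableAt one_ne_zero).hasFDerivAt
  have hf_smul := (hf.differentiableAt two_ne_zero).hasFDerivAt.fun_smul (hasFDerivAt_fderiv hg)
  have hg_smul := (hg.differentiableAt two_ne_zero).hasFDerivAt.fun_smul (hasFDerivAt_fderiv hf)
  have hfg := (hf_smul.fun_add hg_smul).congr_of_eventuallyEq hfderiv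
  simp only [iteratedFDeriv_two_apply, hfg.fderiv, Matrix.cons_val_zero, Matrix.cons_val_one,
    Matrix.cons_val_fin_one, add_apply, smul_apply, ContinuousLinearMap.smulRight_apply,
    smul_eq_mul]
  ring

theorem iteratedFDeriv_two_clm [NormedSpace ℝ E] {F : Type*} [NormedAddCommGroup F]
    [NormedSpace ℝ F] (l : E →L[ℝ] F) (x : E) : iteratedFDeriv ℝ 2 l x = 0 := by
  ext v
  simp [iteratedFDeriv_two_apply, funext fun y => l.fderiv (x := y)]

variable [InnerProductSpace ℝ E]

theorem hasFDerivAt_norm {x : E} (hx : x ≠ 0) :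
    HasFDerivAt (fun y : E => ‖y‖) (‖x‖⁻¹ • innerSL ℝ x) x := by
  have hnorm : ‖x‖ ≠ 0 := norm_ne_zero_iff.2 hx
  have hsqrt := (hasStrictFDerivAt_norm_sq x).hasFDerivAt.sqrt (pow_ne_zero 2 hnorm)
  simp only [Real.sqrt_sq (norm_nonneg _)] at hsqrt
  refine hsqrt.congr_fderiv ?_
  ext v
  simp only [one_div, mul_inv_rev, smul_apply, coe_innerSL_apply, nsmul_eq_mul, Nat.cast_ofNat,
    smul_eq_mul]
  field_simp

theorem hasFDerivAt_comp_norm {φ : ℝ → ℝ} {φ' : ℝ} {x : E} (hx : x ≠ 0)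
    (hφ : HasDerivAt φ φ' ‖x‖) :
    HasFDerivAt (fun y => φ ‖y‖) ((φ' / ‖x‖) • innerSL ℝ x) x :=
  (hφ.comp_hasFDerivAt x (hasFDerivAt_norm hx)).congr_fderiv (by rw [smul_smul, div_eq_mul_inv])

theorem iteratedFDeriv_two_comp_norm {φ : ℝ → ℝ} {x : E} (hx : x ≠ 0)
    (hφ : ContDiffAt ℝ 2 φ ‖x‖) (v w : E) :
    iteratedFDeriv ℝ 2 (fun y => φ ‖y‖) x ![v, w] =
      deriv φ ‖x‖ / ‖x‖ * ⟪v, w⟫ +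
        (iteratedDeriv 2 φ ‖x‖ - deriv φ ‖x‖ / ‖x‖) / ‖x‖ ^ 2 * (⟪x, v⟫ * ⟪x, w⟫) := by
  have hnorm : ‖x‖ ≠ 0 := norm_ne_zero_iff.2 hx
  let L : E →L[ℝ] E →L[ℝ] ℝ := innerSL ℝ
  have hL (y z : E) : L y z = ⟪y, z⟫ := rfl
  have hfderiv : (fderiv ℝ fun y : E => φ ‖y‖) =ᶠ[𝓝 x] fun y => (deriv φ ‖y‖ / ‖y‖) • L y := by
    filter_upwards [isOpen_ne.mem_nhds hx,
      continuous_norm.continuousAt.eventually (hφ.eventually (by simp))] with y hy hφy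
    exact (hasFDerivAt_comp_norm hy (hφy.differentiableAt two_ne_zero).hasDerivAt).fderiv
  have hφ' : HasDerivAt (deriv φ) (iteratedDeriv 2 φ ‖x‖) ‖x‖ := by
    rw [iteratedDeriv_succ, iteratedDeriv_one]
    exact ((hφ.derivWithin (m := 1) (by norm_num)).differentiableAt one_ne_zero).hasDerivAt
  have hquot := hasFDerivAt_comp_norm hx (hφ'.fun_div (hasDerivAt_id ‖x‖) hnorm)
  have hsmul := (hquot.fun_smul L.hasFDerivAt).congr_of_eventuallyEq hfderiv
  simp only [iteratedFDeriv_two_apply, hsmul.fderiv, hL, id_eq, mul_one, Matrix.cons_val_zero,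
    Matrix.cons_val_one, Matrix.cons_val_fin_one, add_apply, smul_apply,
    ContinuousLinearMap.smulRight_apply, coe_innerSL_apply, smul_eq_mul, add_right_inj]
  field_simp

end SecondDerivative

section Laplacian

open InnerProductSpace Laplacian Module
open scoped RealInnerProductSpace

variable {E : Type*} [NormedAddCommGroup E] [InnerProductSpace ℝ E] [FiniteDimensional ℝ E]

theorem laplacian_mul {ι : Type*} [Fintype ι] {f g : E → ℝ} {x : E} (hf : ContDiffAt ℝ 2 f x)
    (hg : ContDiffAt ℝ 2 g x) (b : OrthonormalBasis ι ℝ E) :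
    Δ (fun y => f y * g y) x =
      f x * Δ g x + 2 * ∑ i, fderiv ℝ f x (b i) * fderiv ℝ g x (b i) + g x * Δ f x := by
  simp only [laplacian_eq_iteratedFDeriv_orthonormalBasis _ b, iteratedFDeriv_two_mul hf hg,
    Finset.mul_sum, ← Finset.sum_add_distrib]
  exact Finset.sum_congr rfl fun i _ => by ring

theorem harmonicAt_clm {F : Type*} [NormedAddCommGroup F] [NormedSpace ℝ F] (l : E →L[ℝ] F)
    (x : E) : HarmonicAt l x :=
  ⟨l.contDiff.contDiffAt, .of_forall fun y => by
    simp [laplacian_eq_iteratedFDeriv_stdOrthonormalBasis, iteratedFDeriv_two_clm]⟩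

theorem laplacian_comp_norm {φ : ℝ → ℝ} {x : E} (hx : x ≠ 0) (hφ : ContDiffAt ℝ 2 φ ‖x‖) :
    Δ (fun y : E => φ ‖y‖) x =
      iteratedDeriv 2 φ ‖x‖ + (finrank ℝ E - 1) / ‖x‖ * deriv φ ‖x‖ := by
  have hnorm : ‖x‖ ≠ 0 := norm_ne_zero_iff.2 hx
  simp only [laplacian_eq_iteratedFDeriv_stdOrthonormalBasis, iteratedFDeriv_two_comp_norm hx hφ,
    inner_self_eq_norm_sq_to_K, OrthonormalBasis.norm_eq_one, ringHom_apply, one_pow, mul_one,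
    ← pow_two, Finset.sum_add_distrib, Finset.sum_const, Finset.card_univ, Fintype.card_fin,
    nsmul_eq_mul, ← Finset.mul_sum, OrthonormalBasis.sum_sq_inner_left]
  field_simp
  ring

theorem laplacian_comp_norm_mul {φ : ℝ → ℝ} {h : E → ℝ} {x : E} (hx : x ≠ 0)
    (hφ : ContDiffAt ℝ 2 φ ‖x‖) (hh : ContDiffAt ℝ 2 h x) :
    Δ (fun y => φ ‖y‖ * h y) x =
      (iteratedDeriv 2 φ ‖x‖ + (finrank ℝ E - 1) / ‖x‖ * deriv φ ‖x‖) * h x +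
        2 * (deriv φ ‖x‖ / ‖x‖) * fderiv ℝ h x x + φ ‖x‖ * Δ h x := by
  let b := stdOrthonormalBasis ℝ E
  have hradial := hasFDerivAt_comp_norm hx (hφ.differentiableAt two_ne_zero).hasDerivAt
  have hexpand : fderiv ℝ h x x = ∑ i, ⟪x, b i⟫ * fderiv ℝ h x (b i) := by
    conv_lhs => rhs; rw [← b.sum_repr' x]
    simp [real_inner_comm]
  have hgrad : ∑ i, fderiv ℝ (fun y : E => φ ‖y‖) x (b i) * fderiv ℝ h x (b i) =
      deriv φ ‖x‖ / ‖x‖ * fderiv ℝ h x x := by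
    simp [hradial.fderiv, hexpand, Finset.mul_sum, mul_assoc]
  have hφ_norm : ContDiffAt ℝ 2 (fun y : E => φ ‖y‖) x := hφ.comp x (contDiffAt_norm ℝ hx)
  rw [laplacian_mul hφ_norm hh b, hgrad, laplacian_comp_norm hx hφ]
  ring

end Laplacian

section PowerLog

open InnerProductSpace Laplacian Module
open scoped Topology ContDiff

theorem contDiffAt_rpow_mul_log_inv {n : WithTop ℕ∞} (p : ℝ) {r : ℝ} (hr : r ≠ 0) :
    ContDiffAt ℝ n (fun s : ℝ => s ^ p * Real.log (1 / s)) r :=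
  (contDiffAt_id.rpow_const_of_ne hr).mul
    ((contDiffAt_const.div contDiffAt_id hr).log (one_div_ne_zero hr))

theorem hasDerivAt_rpow_mul_affine_log_inv (p a c : ℝ) {r : ℝ} (hr : r ≠ 0) :
    HasDerivAt (fun s : ℝ => s ^ p * (a * Real.log (1 / s) + c))
      (r ^ (p - 1) * (p * a * Real.log (1 / r) + (p * c - a))) r := by
  have hlog : HasDerivAt (fun s : ℝ => a * Real.log (1 / s) + c) (a * -r⁻¹) r := by
    simpa only [one_div, Real.log_inv] using
      ((Real.hasDerivAt_log hr).fun_neg.const_mul a).add_const c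
  refine ((Real.hasDerivAt_rpow_const (Or.inl hr)).fun_mul hlog).congr_deriv ?_
  rw [Real.rpow_sub_one hr]
  field_simp
  ring

theorem deriv_rpow_mul_log_inv (p : ℝ) {r : ℝ} (hr : r ≠ 0) :
    deriv (fun s : ℝ => s ^ p * Real.log (1 / s)) r =
      r ^ (p - 1) * (p * Real.log (1 / r) - 1) := by
  simpa [sub_eq_add_neg] using (hasDerivAt_rpow_mul_affine_log_inv p 1 0 hr).deriv

theorem iteratedDeriv_two_rpow_mul_log_inv (p : ℝ) {r : ℝ} (hr : r ≠ 0) :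
    iteratedDeriv 2 (fun s : ℝ => s ^ p * Real.log (1 / s)) r =
      r ^ (p - 2) * (p * (p - 1) * Real.log (1 / r) - (2 * p - 1)) := by
  have hderiv : deriv (fun s : ℝ => s ^ p * Real.log (1 / s)) =ᶠ[𝓝 r]
      fun s => s ^ (p - 1) * (p * Real.log (1 / s) + -1) := by
    filter_upwards [isOpen_ne.mem_nhds hr] with s hs using deriv_rpow_mul_log_inv p hs
  rw [iteratedDeriv_succ, iteratedDeriv_one, hderiv.deriv_eq,
    (hasDerivAt_rpow_mul_affine_log_inv (p - 1) p (-1) hr).deriv]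
  ring_nf

variable {E : Type*} [NormedAddCommGroup E] [InnerProductSpace ℝ E] [FiniteDimensional ℝ E]

theorem laplacian_norm_rpow_mul_log_inv_norm_mul {h : E → ℝ} {x : E} (p : ℝ) {d : ℝ} (hx : x ≠ 0)
    (hh : HarmonicAt h x) (hhom : fderiv ℝ h x x = d * h x) :
    Δ (fun y => ‖y‖ ^ p * Real.log (1 / ‖y‖) * h y) x =
      ‖x‖ ^ (p - 2) * (p * (p + (finrank ℝ E - 2 + 2 * d)) * Real.log (1 / ‖x‖) -
        (2 * p + (finrank ℝ E - 2 + 2 * d))) * h x := by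
  have hnorm : ‖x‖ ≠ 0 := norm_ne_zero_iff.2 hx
  have hharm : Δ h x = 0 := hh.2.self_of_nhds
  have hpow : ‖x‖ ^ (p - 1) = ‖x‖ ^ (p - 2) * ‖x‖ := by
    rw [← Real.rpow_add_one hnorm]
    ring_nf
  rw [laplacian_comp_norm_mul (φ := fun r => r ^ p * Real.log (1 / r)) hx
      (contDiffAt_rpow_mul_log_inv p hnorm) hh.1,
    hhom, hharm, deriv_rpow_mul_log_inv p hnorm, iteratedDeriv_two_rpow_mul_log_inv p hnorm, hpow]
  field_simp
  ring

theorem stmt3_general (l : E →L[ℝ] ℝ) (μ₁ : ℝ) (hμ₁ : μ₁ = -((finrank ℝ E : ℝ) ^ 2 / 4))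
    (u : E → ℝ)
    (hu : ∀ x, u x = ‖x‖ ^ (-(finrank ℝ E : ℝ) / 2) * l x * Real.log (1 / ‖x‖)) :
    ContDiffOn ℝ ω u {0}ᶜ ∧ ∀ x ≠ 0, -Δ u x + μ₁ / ‖x‖ ^ 2 * u x = 0 := by
  obtain rfl : u = fun x => ‖x‖ ^ (-(finrank ℝ E : ℝ) / 2) * Real.log (1 / ‖x‖) * l x :=
    funext fun x => by rw [hu, mul_right_comm]
  refine ⟨fun x hx => ?_, fun x hx => ?_⟩
  · have hradial := (contDiffAt_rpow_mul_log_inv (n := ω) (-(finrank ℝ E : ℝ) / 2)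
      (norm_ne_zero_iff.2 hx)).comp x (contDiffAt_norm ℝ hx)
    exact (hradial.mul l.contDiff.contDiffAt).contDiffWithinAt
  · have hlinear : fderiv ℝ l x x = 1 * l x := by rw [l.fderiv, one_mul]
    have hnorm : 0 < ‖x‖ := norm_pos_iff.2 hx
    rw [laplacian_norm_rpow_mul_log_inv_norm_mul _ hx (harmonicAt_clm l x) hlinear,
      Real.rpow_sub hnorm, Real.rpow_two, hμ₁]
    field_simp
    ring

end PowerLog

section HalfSpace

open InnerProductSpace Laplacian

/-- The last coordinate `x_N` as a continuous linear functional; it is `0` for `N = 0`. -/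
def lastCoordCLM (N : ℕ) : EuclideanSpace ℝ (Fin N) →L[ℝ] ℝ where
  toFun := lastCoord
  map_add' x y := by unfold lastCoord; split_ifs <;> simp
  map_smul' c x := by unfold lastCoord; split_ifs <;> simp
  cont := by unfold lastCoord; split_ifs <;> fun_prop

theorem lap_eq_laplacian {N : ℕ} (f : EuclideanSpace ℝ (Fin N) → ℝ) : lap f = Δ f := by
  simp [laplacian_eq_iteratedFDeriv_orthonormalBasis f (EuclideanSpace.basisFun (Fin N) ℝ),
    funext_iff, lap]

theorem upperHalf_subset_compl_zero (N : ℕ) : upperHalf N ⊆ {0}ᶜ := by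
  rintro _ hx rfl
  exact hx.ne' (map_zero (lastCoordCLM N))

end HalfSpace

/-- At the critical value `μ₁ = −N²/4`, the function `|x|^{−N/2} x_N ln(1/|x|)` is a
`C²` solution of `−Δu + μ₁|x|⁻²u = 0` in the half-space. -/
theorem stmt3 (N : ℕ) (hN : 2 ≤ N) (μ₁ : ℝ) (hμ₁ : μ₁ = -((N : ℝ) ^ 2 / 4))
    (u : EuclideanSpace ℝ (Fin N) → ℝ)
    (hu : ∀ x, u x = ‖x‖ ^ (-(N : ℝ) / 2) * lastCoord x * Real.log (1 / ‖x‖)) :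
    ContDiffOn ℝ 2 u (upperHalf N) ∧
      ∀ x ∈ upperHalf N, -lap u x + μ₁ / ‖x‖ ^ 2 * u x = 0 := by
  obtain ⟨hsmooth, hsolution⟩ := stmt3_general (lastCoordCLM N) μ₁ (by simpa) u (by simpa using! hu)
  exact ⟨(hsmooth.mono (upperHalf_subset_compl_zero N)).of_le le_top, fun x hx => by
    simpa only [lap_eq_laplacian] using hsolution x (upperHalf_subset_compl_zero N hx)⟩
end
end
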